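/- Fix n ∈ ℕ, η ∈ (0,1) and α ∈ (0,∞). (i) If Q is an α-sequentially interactive channel from X^n to Z^n, then g_TV(Q,η) ≥ (1−η)/√(2n(e^α−1)²), and consequently Δ_A^{(n)}(Q,η) ≥ ω_TV( ((1−η)/√(2n(e^α−1)²))^− ). (ii) For every η0 ∈ (0,1) and every ε0 > 0 there exists a finite constant c > 0 such that for all η ∈ (0,η0), all n > |log η|/ε0 and every channel R from X^n to Z^n, g_H(R,η) ≥ c√(|log η|/n). Consequently, for such η, n and every α-sequentially interactive channel Q, Δ_A^{(n)}(Q,η) ≥ max{ ω_TV( ((1−η)/√(2n(e^α−1)²))^− ), ω_H( (c√(|log η|/n))^− ) }. -/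

import Mathlib

open MeasureTheory ProbabilityTheory ENNReal

namespace PrivacyPaper

variable {X Z Ω : Type*} [MeasurableSpace X] [MeasurableSpace Z] [MeasurableSpace Ω]

/-- Total variation distance between two measures:
`d_TV(P0, P1) = sup_{A measurable} |P0(A) - P1(A)|`. -/
noncomputable def dTV (P0 P1 : Measure Ω) : ℝ :=
  ⨆ A : {A : Set Ω // MeasurableSet A}, |(P0 A.1).toReal - (P1 A.1).toReal|

/-- Hellinger distance between two measures, computed via densities with respect to the
dominating measure `P0 + P1`. -/
noncomputable def dH (P0 P1 : Measure Ω) : ℝ :=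
  Real.sqrt (∫ ω, (Real.sqrt ((P0.rnDeriv (P0 + P1) ω).toReal) -
    Real.sqrt ((P1.rnDeriv (P0 + P1) ω).toReal)) ^ 2 ∂(P0 + P1))

/-- Hellinger affinity `ρ(P0, P1) = ∫ √(p0 p1) dμ`, with `μ = P0 + P1`. -/
noncomputable def hellingerAffinity (P0 P1 : Measure Ω) : ℝ :=
  ∫ ω, Real.sqrt ((P0.rnDeriv (P0 + P1) ω).toReal * (P1.rnDeriv (P0 + P1) ω).toReal)
    ∂(P0 + P1)

/-- Modulus of continuity of a functional `θ` over `P` with respect to a distance `d`,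
with values in `ℝ≥0∞`. -/
noncomputable def modulus (d : Measure X → Measure X → ℝ) (P : Set (Measure X))
    (θ : Measure X → ℝ) (ε : ℝ) : ℝ≥0∞ :=
  ⨆ (P0 : Measure X) (_ : P0 ∈ P) (P1 : Measure X) (_ : P1 ∈ P) (_ : d P0 P1 ≤ ε),
    ENNReal.ofReal |θ P0 - θ P1|

/-- Total variation modulus of continuity `ω_TV`. -/
noncomputable def omegaTV (P : Set (Measure X)) (θ : Measure X → ℝ) : ℝ → ℝ≥0∞ :=
  modulus dTV P θ

/-- Hellinger modulus of continuity `ω_H`. -/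
noncomputable def omegaH (P : Set (Measure X)) (θ : Measure X → ℝ) : ℝ → ℝ≥0∞ :=
  modulus dH P θ

/-- Push-forward of a measure through a channel `c` (given as a map into measures):
`(c P)(A) = ∫ c(A|x) dP(x)`. -/
noncomputable def push (c : X → Measure Z) (μ : Measure X) : Measure Z := μ.bind c

/-- Privatized Hellinger modulus `ω_H^{(Q1)}`. -/
noncomputable def omegaHQ (c : X → Measure Z) (P : Set (Measure X)) (θ : Measure X → ℝ) :
    ℝ → ℝ≥0∞ :=
  modulus (fun P0 P1 => dH (push c P0) (push c P1)) P θ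

/-- Left limit at `m ∈ ℝ≥0∞` of a nondecreasing `ℝ≥0∞`-valued function on `[0,∞)`:
`f(m⁻) = sup_{0 ≤ y < m} f(y)`. -/
noncomputable def leftLimE (f : ℝ → ℝ≥0∞) (m : ℝ≥0∞) : ℝ≥0∞ :=
  ⨆ (y : ℝ) (_ : 0 ≤ y) (_ : ENNReal.ofReal y < m), f y

/-- Right limit at `x ∈ ℝ` of a nondecreasing `ℝ≥0∞`-valued function:
`f(x⁺) = inf_{y > x} f(y)`. -/
noncomputable def rightLimE (f : ℝ → ℝ≥0∞) (x : ℝ) : ℝ≥0∞ :=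
  ⨅ (y : ℝ) (_ : x < y), f y

/-- Left limit of a nondecreasing loss function at `m ∈ ℝ≥0∞`, with the convention
`l(0⁻) = l(0)`, as an element of `ℝ≥0∞`. -/
noncomputable def lossLeftLim (l : ℝ → ℝ) (m : ℝ≥0∞) : ℝ≥0∞ :=
  if m = 0 then ENNReal.ofReal (l 0)
  else ⨆ (y : ℝ) (_ : 0 ≤ y) (_ : ENNReal.ofReal y < m), ENNReal.ofReal (l y)

/-- A (randomized) test is a measurable function with values in `[0,1]`. -/
def IsTest (φ : Ω → ℝ) : Prop := Measurable φ ∧ ∀ ω, 0 ≤ φ ω ∧ φ ω ≤ 1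

/-- Risk of a test: `∫ φ dμ0 + ∫ (1 - φ) dμ1`. -/
noncomputable def testRisk (μ0 μ1 : Measure Ω) (φ : Ω → ℝ) : ℝ :=
  (∫ ω, φ ω ∂μ0) + ∫ ω, (1 - φ ω) ∂μ1

/-- Testing affinity of a pair of measures: `π(μ0, μ1) = inf_φ (∫ φ dμ0 + ∫ (1-φ) dμ1)`. -/
noncomputable def pairAffinity (μ0 μ1 : Measure Ω) : ℝ :=
  sInf {r : ℝ | ∃ φ : Ω → ℝ, IsTest φ ∧ r = testRisk μ0 μ1 φ}

/-- Testing affinity of two sets of measures: `π(M0, M1) = sup π(μ0, μ1)`. -/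
noncomputable def setAffinity (M0 M1 : Set (Measure Ω)) : ℝ :=
  sSup {r : ℝ | ∃ μ0 ∈ M0, ∃ μ1 ∈ M1, r = pairAffinity μ0 μ1}

/-- The set of finite convex combinations of elements of `M`. -/
def convComb (M : Set (Measure Ω)) : Set (Measure Ω) :=
  {μ | ∃ (m : ℕ) (w : Fin m → ℝ≥0∞) (ν : Fin m → Measure Ω),
    (∑ i, w i) = 1 ∧ (∀ i, ν i ∈ M) ∧ μ = ∑ i, w i • ν i}

/-- The upper affinity `η_A^{(n)}(Q, Δ)`, for the channel described through the map
`QPn : P ↦ Q P^{⊗n}`. -/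
noncomputable def etaA {Zn : Type*} [MeasurableSpace Zn] (QPn : Measure X → Measure Zn)
    (P : Set (Measure X)) (θ : Measure X → ℝ) (Δ : ℝ) : ℝ :=
  ⨆ t : ℝ, setAffinity (convComb (QPn '' {μ | μ ∈ P ∧ θ μ ≤ t}))
    (convComb (QPn '' {μ | μ ∈ P ∧ t + Δ ≤ θ μ}))

/-- The affinity `η_2^{(n)}(Q, Δ)` (no convex hulls). -/
noncomputable def eta2 {Zn : Type*} [MeasurableSpace Zn] (QPn : Measure X → Measure Zn)
    (P : Set (Measure X)) (θ : Measure X → ℝ) (Δ : ℝ) : ℝ :=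
  ⨆ t : ℝ, setAffinity (QPn '' {μ | μ ∈ P ∧ θ μ ≤ t}) (QPn '' {μ | μ ∈ P ∧ t + Δ ≤ θ μ})

/-- `Δ_A^{(n)}(Q, η) = sup {Δ ≥ 0 : η_A^{(n)}(Q, Δ) > η}`, as an element of `ℝ≥0∞`. -/
noncomputable def DeltaA {Zn : Type*} [MeasurableSpace Zn] (QPn : Measure X → Measure Zn)
    (P : Set (Measure X)) (θ : Measure X → ℝ) (η : ℝ) : ℝ≥0∞ :=
  ⨆ (Δ : ℝ) (_ : 0 ≤ Δ) (_ : η < etaA QPn P θ Δ), ENNReal.ofReal Δ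

/-- `Δ_2^{(n)}(Q, η) = sup {Δ ≥ 0 : η_2^{(n)}(Q, Δ) > η}`, as an element of `ℝ≥0∞`. -/
noncomputable def Delta2 {Zn : Type*} [MeasurableSpace Zn] (QPn : Measure X → Measure Zn)
    (P : Set (Measure X)) (θ : Measure X → ℝ) (η : ℝ) : ℝ≥0∞ :=
  ⨆ (Δ : ℝ) (_ : 0 ≤ Δ) (_ : η < eta2 QPn P θ Δ), ENNReal.ofReal Δ

/-- The privatized distribution `Q P^{⊗n}` of the observation vector. -/
noncomputable def privProd {Zn : Type*} [MeasurableSpace Zn] (n : ℕ)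
    (Q : (Fin n → X) → Measure Zn) (μ : Measure X) : Measure Zn :=
  (Measure.pi fun _ : Fin n => μ).bind Q

/-- The `Q`-privatized minimax risk `M_n(Q, P, θ)` (with values in `ℝ≥0∞`), where the channel
is described through the map `QPn : P ↦ Q P^{⊗n}`. -/
noncomputable def minimaxRisk {Zn : Type*} [MeasurableSpace Zn] (l : ℝ → ℝ)
    (QPn : Measure X → Measure Zn) (P : Set (Measure X)) (θ : Measure X → ℝ) : ℝ≥0∞ :=
  ⨅ (est : Zn → ℝ) (_ : Measurable est), ⨆ (μ : Measure X) (_ : μ ∈ P),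
    ∫⁻ z, ENNReal.ofReal (l |est z - θ μ|) ∂(QPn μ)

/-- Iterated sequential integral: `seqIntegral K n x g` is
`∫ ⋯ ∫ g(z_1,…,z_n) K_{n-1}(dz_n | x_n, z_{1:n-1}) ⋯ K_0(dz_1 | x_1)`. -/
noncomputable def seqIntegral (K : (i : ℕ) → X × (Fin i → Z) → Measure Z) :
    (n : ℕ) → (Fin n → X) → ((Fin n → Z) → ℝ≥0∞) → ℝ≥0∞
  | 0, _, g => g fun i => i.elim0
  | n + 1, x, g => seqIntegral K n (fun i => x i.castSucc)
      fun zpre => ∫⁻ zn, g (Fin.snoc zpre zn) ∂(K n (x (Fin.last n), zpre))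

/-- An `α`-sequentially interactive channel: `Q` is obtained by sequential composition of
Markov kernels `K i : X × Z^i → Z`, each of which satisfies the `α`-differential privacy
ratio bound in its `X`-argument. -/
def IsSeqInteractive (n : ℕ) (α : ℝ) (Q : Kernel (Fin n → X) (Fin n → Z)) : Prop :=
  ∃ K : (i : ℕ) → Kernel (X × (Fin i → Z)) Z,
    (∀ i, IsMarkovKernel (K i)) ∧
    (∀ (i : ℕ) (x x' : X) (zpre : Fin i → Z) (A : Set Z), MeasurableSet A →
      K i (x, zpre) A ≤ ENNReal.ofReal (Real.exp α) * K i (x', zpre) A) ∧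
    (∀ (x : Fin n → X) (A : Set (Fin n → Z)), MeasurableSet A →
      Q x A = seqIntegral (fun i p => K i p) n x (A.indicator fun _ => 1))

/-- The `α`-private minimax risk `M_{n,α}(P, θ)`: infimum over all output dimensions
`q ∈ ℕ` and all `α`-sequentially interactive channels from `X^n` to `(ℝ^q)^n`. -/
noncomputable def privMinimaxRisk (n : ℕ) (α : ℝ) (l : ℝ → ℝ) (P : Set (Measure X))
    (θ : Measure X → ℝ) : ℝ≥0∞ :=
  ⨅ (q : ℕ) (Q : Kernel (Fin n → X) (Fin n → (Fin q → ℝ))) (_ : IsMarkovKernel Q)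
    (_ : IsSeqInteractive n α Q),
      minimaxRisk l (privProd n fun x => Q x) P θ

/-- The mixture `λ P0 + (1-λ) P1` of two measures. -/
noncomputable def mix (lam : ℝ) (P0 P1 : Measure Ω) : Measure Ω :=
  ENNReal.ofReal lam • P0 + ENNReal.ofReal (1 - lam) • P1

/-- Convexity of a set of measures. -/
def ConvexMeasureSet (P : Set (Measure Ω)) : Prop :=
  ∀ P0 ∈ P, ∀ P1 ∈ P, ∀ lam : ℝ, 0 ≤ lam → lam ≤ 1 → mix lam P0 P1 ∈ P

/-- Linearity of a functional on a (convex) set of measures. -/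
def LinearFunctional (P : Set (Measure X)) (θ : Measure X → ℝ) : Prop :=
  ∀ P0 ∈ P, ∀ P1 ∈ P, ∀ lam : ℝ, 0 ≤ lam → lam ≤ 1 →
    θ (mix lam P0 P1) = lam * θ P0 + (1 - lam) * θ P1

/-- A family of measures is dominated if all its members are absolutely continuous with
respect to a single σ-finite measure. -/
def Dominated (M : Set (Measure Ω)) : Prop :=
  ∃ ν : Measure Ω, SigmaFinite ν ∧ ∀ μ ∈ M, μ ≪ ν

/-- Condition (A): the functional `θ` is bounded on `P`. -/
def CondA (P : Set (Measure X)) (θ : Measure X → ℝ) : Prop := ∃ c : ℝ, ∀ μ ∈ P, |θ μ| ≤ c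

/-- Condition (B): the loss `l : [0,∞) → [0,∞)` is nondecreasing, `l 0 = 0` and
`l(3t/2) ≤ a l(t)` for all `t ≥ 0`. -/
def CondB (l : ℝ → ℝ) (a : ℝ) : Prop :=
  (∀ u v : ℝ, 0 ≤ u → u ≤ v → l u ≤ l v) ∧ (∀ u : ℝ, 0 ≤ u → 0 ≤ l u) ∧ l 0 = 0 ∧
    ∀ u : ℝ, 0 ≤ u → l (3 / 2 * u) ≤ a * l u

/-- Sup-norm of a (bounded) function. -/
noncomputable def supNorm (f : X → ℝ) : ℝ := ⨆ x, |f x|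

/-- The binary privatization channel `Q_1^{(α,ℓ)}`, supported on `{-z0, z0}` with
`z0 = ‖ℓ‖_∞ (e^α + 1)/(e^α - 1)`, giving the point `z0` probability `(1 + ℓ(x)/z0)/2`. -/
noncomputable def binChannel (α : ℝ) (ℓ : X → ℝ) (x : X) : Measure ℝ :=
  ENNReal.ofReal ((1 + ℓ x / (supNorm ℓ * ((Real.exp α + 1) / (Real.exp α - 1)))) / 2) •
      Measure.dirac (supNorm ℓ * ((Real.exp α + 1) / (Real.exp α - 1))) +
    ENNReal.ofReal ((1 - ℓ x / (supNorm ℓ * ((Real.exp α + 1) / (Real.exp α - 1)))) / 2) •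
      Measure.dirac (-(supNorm ℓ * ((Real.exp α + 1) / (Real.exp α - 1))))

/-- `g_d(Q, η) = inf { d(P0, P1) : π(Q P0^{⊗n}, Q P1^{⊗n}) ≤ η }`, as an element of `ℝ≥0∞`
(with `inf ∅ = ∞`). -/
noncomputable def gDist {Zn : Type*} [MeasurableSpace Zn] (d : Measure X → Measure X → ℝ)
    (QPn : Measure X → Measure Zn) (P : Set (Measure X)) (η : ℝ) : ℝ≥0∞ :=
  ⨅ (P0 : Measure X) (_ : P0 ∈ P) (P1 : Measure X) (_ : P1 ∈ P)
    (_ : pairAffinity (QPn P0) (QPn P1) ≤ η), ENNReal.ofReal (d P0 P1)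

/-- Integral of a bounded measurable function against a finite signed measure, via the
Jordan decomposition. -/
noncomputable def sInt (φ : Ω → ℝ) (σ : MeasureTheory.SignedMeasure Ω) : ℝ :=
  (∫ ω, φ ω ∂σ.toJordanDecomposition.posPart) - ∫ ω, φ ω ∂σ.toJordanDecomposition.negPart

/-- Membership in the set `𝕋 = {φ ∈ L∞(μ) : a ≤ ∫ φ f dμ ≤ b  ∀ f ∈ L1(μ), ‖f‖_{L1} ≤ 1}`. -/
def memT (μ : Measure Ω) (a b : ℝ) (φ : Ω → ℝ) : Prop :=
  Measurable φ ∧ (∃ c : ℝ, ∀ᵐ ω ∂μ, |φ ω| ≤ c) ∧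
    ∀ f : Ω → ℝ, Integrable f μ → (∫ ω, |f ω| ∂μ) ≤ 1 →
      a ≤ (∫ ω, φ ω * f ω ∂μ) ∧ (∫ ω, φ ω * f ω ∂μ) ≤ b

/-- The function `G(s,t) = log((1-s)/(1-t)) / log((t/s)·(1-s)/(1-t))`, with `G(s,s) = s`. -/
noncomputable def Gfun (s t : ℝ) : ℝ :=
  if s = t then s
  else Real.log ((1 - s) / (1 - t)) / Real.log (t / s * ((1 - s) / (1 - t)))

/-!
The squared Hellinger affinity of two measures is the infimum of `(∫ f ∂μ) (∫ g ∂ν)` over `f g ≥ 1`.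
In this form a uniform lower bound for a pair of kernels visibly multiplies with the affinity of the
measures they act on. Hence the affinity is at least multiplicative over products and over
sequential interaction, and randomization can only increase it. The choice
`f, g = 1 ± e (2 φ - 1)` for a test `φ` shows that squared affinity `≥ c` forces `π ≥ 1 - √(1 - c)`.

(i) Under `α`-privacy the probability that a kernel gives to a fixed set varies by a factor at most
`e ^ α` with the datum, so averaging over `P₀` or `P₁` changes it by a relative amount
`δ = (e ^ α - 1) d_TV(P₀, P₁)`. Each step therefore has squared affinity `≥ 1 - δ²`, and `n` steps
have `≥ (1 - δ²)ⁿ ≥ 1 - n δ²`, so that `1 - π ≤ √n δ`.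

(ii) With `ρ = 1 - d_H² / 2`, the output laws have squared affinity `≥ ρ²ⁿ`, so `π ≤ η` forces
`ρ²ⁿ ≤ 1 - (1 - η)² = η (2 - η) ≤ exp (-(1 - η) |log η| / 2)`, which is a lower bound on `d_H`.

Two elements of `P` closer than `g_d(Q, η)` have output laws of testing affinity `> η`, and up to
swapping they lie in the two hypotheses for `t = θ(P₀)`, `Δ = θ(P₁) - θ(P₀)`; this gives `Δ_A`.
-/

section Fidelity

variable {Y : Type*} [MeasurableSpace Y]

/-- The squared Hellinger affinity of two measures, in Alberti's variational form: by the
Cauchy–Schwarz inequality `(∫ f ∂μ) (∫ g ∂ν) ≥ (∫ √(f g) √(p q))²` for densities `p`, `q`. No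
density occurs in this form, which makes its behaviour under kernels transparent. -/
noncomputable def fidelity (μ ν : Measure Ω) : ℝ≥0∞ :=
  ⨅ (f : Ω → ℝ≥0∞) (g : Ω → ℝ≥0∞) (_ : Measurable f) (_ : Measurable g)
    (_ : ∀ ω, 1 ≤ f ω * g ω), (∫⁻ ω, f ω ∂μ) * ∫⁻ ω, g ω ∂ν

theorem le_fidelity {μ ν : Measure Ω} {c : ℝ≥0∞}
    (h : ∀ f g : Ω → ℝ≥0∞, Measurable f → Measurable g → (∀ ω, 1 ≤ f ω * g ω) →
      c ≤ (∫⁻ ω, f ω ∂μ) * ∫⁻ ω, g ω ∂ν) : c ≤ fidelity μ ν :=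
  le_iInf fun f => le_iInf fun g => le_iInf fun hf => le_iInf fun hg => le_iInf fun hfg =>
    h f g hf hg hfg

theorem fidelity_le {μ ν : Measure Ω} {f g : Ω → ℝ≥0∞} (hf : Measurable f) (hg : Measurable g)
    (hfg : ∀ ω, 1 ≤ f ω * g ω) : fidelity μ ν ≤ (∫⁻ ω, f ω ∂μ) * ∫⁻ ω, g ω ∂ν :=
  iInf₂_le_of_le f g (iInf₂_le_of_le hf hg (iInf_le _ hfg))

theorem mul_fidelity_le {μ ν : Measure Ω} {f g : Ω → ℝ≥0∞} {c : NNReal} (hf : Measurable f)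
    (hg : Measurable g) (hfg : ∀ ω, (c : ℝ≥0∞) ≤ f ω * g ω) :
    c * fidelity μ ν ≤ (∫⁻ ω, f ω ∂μ) * ∫⁻ ω, g ω ∂ν := by
  rcases eq_or_ne c 0 with rfl | hc
  · simp
  have hc0 : (c : ℝ≥0∞) ≠ 0 := by exact_mod_cast hc
  have hscaled : ∀ ω, 1 ≤ f ω * ((c : ℝ≥0∞)⁻¹ * g ω) := fun ω => by
    rw [mul_left_comm, ← ENNReal.inv_mul_cancel hc0 coe_ne_top]
    exact mul_le_mul_right (hfg ω) _
  calc (c : ℝ≥0∞) * fidelity μ ν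
      ≤ c * ((∫⁻ ω, f ω ∂μ) * ∫⁻ ω, (c : ℝ≥0∞)⁻¹ * g ω ∂ν) :=
        mul_le_mul_right (fidelity_le hf (hg.const_mul _) hscaled) _
    _ = (∫⁻ ω, f ω ∂μ) * ∫⁻ ω, g ω ∂ν := by
        rw [lintegral_const_mul _ hg, mul_left_comm _ (c : ℝ≥0∞)⁻¹, ← mul_assoc,
          ENNReal.mul_inv_cancel hc0 coe_ne_top, one_mul]

theorem fidelity_le_fidelity_map {φ : Ω → Y} (hφ : Measurable φ) (μ ν : Measure Ω) :
    fidelity μ ν ≤ fidelity (μ.map φ) (ν.map φ) :=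
  le_fidelity fun f g hf hg hfg => by
    rw [lintegral_map hf hφ, lintegral_map hg hφ]
    exact fidelity_le (hf.comp hφ) (hg.comp hφ) fun ω => hfg (φ ω)

theorem mul_fidelity_le_fidelity_compProd {μ ν : Measure Ω} [SFinite μ] [SFinite ν]
    {κ η : Kernel Ω Y} [IsSFiniteKernel κ] [IsSFiniteKernel η] {c : NNReal}
    (h : ∀ ω, c ≤ fidelity (κ ω) (η ω)) : c * fidelity μ ν ≤ fidelity (μ ⊗ₘ κ) (ν ⊗ₘ η) :=
  le_fidelity fun f g hf hg hfg => by
    rw [Measure.lintegral_compProd hf, Measure.lintegral_compProd hg]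
    exact mul_fidelity_le hf.lintegral_kernel_prod_right' hg.lintegral_kernel_prod_right'
      fun ω => (h ω).trans <| fidelity_le (hf.comp measurable_prodMk_left)
        (hg.comp measurable_prodMk_left) fun ω' => hfg (ω, ω')

theorem sq_lintegral_rpow_mul_le_fidelity_withDensity (ρ : Measure Ω) {p q : Ω → ℝ≥0∞}
    (hp : Measurable p) (hq : Measurable q) :
    (∫⁻ ω, (p ω * q ω) ^ (1 / 2 : ℝ) ∂ρ) ^ 2
      ≤ fidelity (ρ.withDensity p) (ρ.withDensity q) := by
  refine le_fidelity fun f g hf hg hfg => ?_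
  rw [lintegral_withDensity_eq_lintegral_mul _ hp hf,
    lintegral_withDensity_eq_lintegral_mul _ hq hg]
  have hpoint : ∀ ω, (p ω * q ω) ^ (1 / 2 : ℝ)
      ≤ (p ω * f ω) ^ (1 / 2 : ℝ) * (q ω * g ω) ^ (1 / 2 : ℝ) := fun ω => by
    rw [← ENNReal.mul_rpow_of_nonneg _ _ (by norm_num), mul_mul_mul_comm]
    exact ENNReal.rpow_le_rpow (le_mul_of_one_le_right' (hfg ω)) (by norm_num)
  have hsq : ∀ x : ℝ≥0∞, (x ^ (1 / 2 : ℝ)) ^ (2 : ℝ) = x := fun x => by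
    rw [← ENNReal.rpow_mul]; norm_num
  have hölder := ENNReal.lintegral_mul_le_Lp_mul_Lq ρ Real.HolderConjugate.two_two
    (f := fun ω => (p ω * f ω) ^ (1 / 2 : ℝ)) (g := fun ω => (q ω * g ω) ^ (1 / 2 : ℝ))
    ((hp.mul hf).pow_const _).aemeasurable ((hq.mul hg).pow_const _).aemeasurable
  simp only [Pi.mul_apply, hsq] at hölder ⊢
  calc (∫⁻ ω, (p ω * q ω) ^ (1 / 2 : ℝ) ∂ρ) ^ 2
      ≤ ((∫⁻ ω, p ω * f ω ∂ρ) ^ (1 / 2 : ℝ) * (∫⁻ ω, q ω * g ω ∂ρ) ^ (1 / 2 : ℝ)) ^ 2 := by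
        gcongr
        exact (lintegral_mono hpoint).trans hölder
    _ = (∫⁻ ω, p ω * f ω ∂ρ) * ∫⁻ ω, q ω * g ω ∂ρ := by
        rw [mul_pow, ← ENNReal.rpow_two, ← ENNReal.rpow_two, hsq, hsq]

theorem one_le_fidelity_self (μ : Measure Ω) [IsProbabilityMeasure μ] : 1 ≤ fidelity μ μ := by
  have h := sq_lintegral_rpow_mul_le_fidelity_withDensity μ (measurable_one (α := ℝ≥0∞) (β := Ω))
    measurable_one
  simpa using h

theorem fidelity_le_fidelity_bind (μ ν : Measure Ω) [SFinite μ] [SFinite ν] (κ : Kernel Ω Y)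
    [IsMarkovKernel κ] : fidelity μ ν ≤ fidelity (μ.bind κ) (ν.bind κ) := by
  have h := mul_fidelity_le_fidelity_compProd (μ := μ) (ν := ν) (κ := κ) (η := κ) (c := 1)
    fun ω => by simpa using one_le_fidelity_self (κ ω)
  rw [coe_one, one_mul] at h
  rw [← Measure.snd_compProd, ← Measure.snd_compProd]
  exact h.trans (fidelity_le_fidelity_map measurable_snd _ _)

theorem ofReal_hellingerAffinity_le (μ ν : Measure Ω) :
    ENNReal.ofReal (hellingerAffinity μ ν)
      ≤ ∫⁻ ω, (μ.rnDeriv (μ + ν) ω * ν.rnDeriv (μ + ν) ω) ^ (1 / 2 : ℝ) ∂(μ + ν) := by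
  have hmeas : Measurable fun ω =>
      √((μ.rnDeriv (μ + ν) ω).toReal * (ν.rnDeriv (μ + ν) ω).toReal) := by fun_prop
  rw [hellingerAffinity, integral_eq_lintegral_of_nonneg_ae (.of_forall fun _ => Real.sqrt_nonneg _)
    hmeas.aestronglyMeasurable]
  refine ofReal_toReal_le.trans (lintegral_mono fun ω => ?_)
  rw [← ENNReal.toReal_mul, Real.sqrt_eq_rpow, ENNReal.toReal_rpow]
  exact ofReal_toReal_le

theorem sq_hellingerAffinity_le_fidelity (μ ν : Measure Ω) [IsFiniteMeasure μ] [IsFiniteMeasure ν] :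
    ENNReal.ofReal (hellingerAffinity μ ν) ^ 2 ≤ fidelity μ ν := by
  have hμ : μ ≪ μ + ν := (Measure.le_add_right le_rfl).absolutelyContinuous
  have hν : ν ≪ μ + ν := (Measure.le_add_left le_rfl).absolutelyContinuous
  have h := sq_lintegral_rpow_mul_le_fidelity_withDensity (μ + ν) (μ.measurable_rnDeriv (μ + ν))
    (ν.measurable_rnDeriv (μ + ν))
  rw [Measure.withDensity_rnDeriv_eq _ _ hμ, Measure.withDensity_rnDeriv_eq _ _ hν] at h
  exact (pow_le_pow_left₀ zero_le (ofReal_hellingerAffinity_le μ ν) 2).trans h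

theorem one_add_sq_le_of_sq_near_one {s : ℝ≥0∞} {δ : NNReal} (hle : s ^ 2 ≤ 1 + δ)
    (hge : 1 ≤ s ^ 2 + δ) : 1 + s ^ 2 ≤ 2 * s + δ ^ 2 := by
  have hs : s ≠ ⊤ := by
    rintro rfl
    exact absurd hle (by simp)
  lift s to NNReal using hs
  norm_cast at hle hge ⊢
  rw [← NNReal.coe_le_coe] at hle hge ⊢
  push_cast at hle hge ⊢
  have hfactor : (1 - (s : ℝ)) ^ 2 ≤ ((1 - (s : ℝ)) * (1 + s)) ^ 2 := by
    rw [mul_pow]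
    exact le_mul_of_one_le_right (sq_nonneg _) (one_le_pow₀ (le_add_of_nonneg_right s.coe_nonneg))
  have hδ : ((1 - (s : ℝ)) * (1 + s)) ^ 2 ≤ (δ : ℝ) ^ 2 :=
    sq_le_sq' (by linarith) (by linarith)
  linarith

theorem two_mul_le_sq_add_one (s : ℝ≥0∞) : 2 * s ≤ s ^ 2 + 1 := by
  rcases eq_or_ne s ⊤ with rfl | hs
  · simp
  lift s to NNReal using hs
  exact_mod_cast (by simpa using two_mul_le_add_sq s 1)

theorem one_sub_sq_le_fidelity_withDensity {μ : Measure Ω} [IsProbabilityMeasure μ]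
    {p : Ω → ℝ≥0∞} (hp : Measurable p) (hp_one : ∫⁻ ω, p ω ∂μ = 1) {δ : NNReal}
    (hle : ∀ᵐ ω ∂μ, p ω ≤ 1 + δ) (hge : ∀ᵐ ω ∂μ, 1 ≤ p ω + δ) :
    ((1 - δ ^ 2 : NNReal) : ℝ≥0∞) ≤ fidelity μ (μ.withDensity p) := by
  set S := ∫⁻ ω, p ω ^ (1 / 2 : ℝ) ∂μ
  have hsq : ∀ ω, (p ω ^ (1 / 2 : ℝ)) ^ 2 = p ω := fun ω => by
    rw [← ENNReal.rpow_mul_natCast]; norm_num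
  have hpoint : ∀ᵐ ω ∂μ, 1 + p ω ≤ 2 * p ω ^ (1 / 2 : ℝ) + δ ^ 2 := by
    filter_upwards [hle, hge] with ω hle hge
    rw [← hsq ω] at hle hge
    simpa only [hsq] using one_add_sq_le_of_sq_near_one hle hge
  have hint : 1 + 1 ≤ 2 * S + (δ : ℝ≥0∞) ^ 2 := by
    have h := lintegral_mono_ae hpoint
    rw [lintegral_add_right _ hp, lintegral_add_right _ measurable_const,
      lintegral_const_mul _ (hp.pow_const _), hp_one] at h
    simpa only [lintegral_const, measure_univ, mul_one] using h
  have hSsq : 1 ≤ S ^ 2 + (δ : ℝ≥0∞) ^ 2 :=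
    (ENNReal.add_le_add_iff_right one_ne_top).1 <|
      calc 1 + 1 ≤ 2 * S + (δ : ℝ≥0∞) ^ 2 := hint
        _ ≤ (S ^ 2 + 1) + (δ : ℝ≥0∞) ^ 2 := by gcongr; exact two_mul_le_sq_add_one S
        _ = S ^ 2 + (δ : ℝ≥0∞) ^ 2 + 1 := add_right_comm _ _ _
  calc ((1 - δ ^ 2 : NNReal) : ℝ≥0∞) ≤ S ^ 2 := by
        push_cast
        exact tsub_le_iff_right.2 hSsq
    _ ≤ fidelity μ (μ.withDensity p) := by
        have h := sq_lintegral_rpow_mul_le_fidelity_withDensity μ (measurable_one (α := ℝ≥0∞)) hp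
        simpa only [Pi.one_apply, one_mul, withDensity_one] using h

theorem one_sub_sq_le_fidelity {μ ν : Measure Ω} [IsProbabilityMeasure μ] [IsProbabilityMeasure ν]
    {δ : NNReal} (hνμ : ν ≤ μ + δ • μ) (hμν : μ ≤ ν + δ • μ) :
    ((1 - δ ^ 2 : NNReal) : ℝ≥0∞) ≤ fidelity μ ν := by
  have hac : ν ≪ μ := hνμ.absolutelyContinuous.trans
    (Measure.AbsolutelyContinuous.rfl.add_left (Measure.AbsolutelyContinuous.rfl.smul_left δ))
  have hp : Measurable (ν.rnDeriv μ) := ν.measurable_rnDeriv μ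
  have hset : ∀ s, ∫⁻ ω in s, ν.rnDeriv μ ω ∂μ = ν s := Measure.setLIntegral_rnDeriv hac
  conv_rhs => rw [← Measure.withDensity_rnDeriv_eq ν μ hac]
  refine one_sub_sq_le_fidelity_withDensity hp (by simp [Measure.lintegral_rnDeriv hac]) ?_ ?_
  · refine ae_le_of_forall_setLIntegral_le_of_sigmaFinite hp fun s _ _ => ?_
    simpa [hset, add_mul] using hνμ s
  · refine ae_le_of_forall_setLIntegral_le_of_sigmaFinite measurable_const fun s _ _ => ?_
    simpa [hset, lintegral_add_left hp] using hμν s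

end Fidelity

section Testing

theorem IsTest.const_zero : IsTest fun _ : Ω => (0 : ℝ) :=
  ⟨measurable_const, fun _ => ⟨le_rfl, zero_le_one⟩⟩

theorem IsTest.one_sub {φ : Ω → ℝ} (hφ : IsTest φ) : IsTest fun ω => 1 - φ ω :=
  ⟨measurable_const.sub hφ.1, fun ω => ⟨sub_nonneg.2 (hφ.2 ω).2, sub_le_self _ (hφ.2 ω).1⟩⟩

theorem IsTest.integrable {φ : Ω → ℝ} (hφ : IsTest φ) (μ : Measure Ω) [IsFiniteMeasure μ] :
    Integrable φ μ :=
  .of_bound hφ.1.aestronglyMeasurable 1 <| .of_forall fun ω => by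
    rw [Real.norm_of_nonneg (hφ.2 ω).1]
    exact (hφ.2 ω).2

theorem IsTest.integral_mem_Icc {φ : Ω → ℝ} (hφ : IsTest φ) (μ : Measure Ω)
    [IsProbabilityMeasure μ] : ∫ ω, φ ω ∂μ ∈ Set.Icc 0 1 :=
  ⟨integral_nonneg fun ω => (hφ.2 ω).1, by
    simpa using integral_mono (hφ.integrable μ) (integrable_const 1) fun ω => (hφ.2 ω).2⟩

theorem testRisk_eq_one_sub {φ : Ω → ℝ} (hφ : IsTest φ) (μ0 μ1 : Measure Ω)
    [IsProbabilityMeasure μ1] :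
    testRisk μ0 μ1 φ = 1 - ((∫ ω, φ ω ∂μ1) - ∫ ω, φ ω ∂μ0) := by
  rw [testRisk, integral_sub (integrable_const _) (hφ.integrable μ1), integral_const]
  simp only [probReal_univ, one_smul]
  ring

theorem pairAffinity_le_testRisk {φ : Ω → ℝ} (hφ : IsTest φ) (μ0 μ1 : Measure Ω) :
    pairAffinity μ0 μ1 ≤ testRisk μ0 μ1 φ := by
  refine csInf_le ⟨0, ?_⟩ ⟨φ, hφ, rfl⟩
  rintro _ ⟨ψ, hψ, rfl⟩
  exact add_nonneg (integral_nonneg fun ω => (hψ.2 ω).1)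
    (integral_nonneg fun ω => (hψ.one_sub.2 ω).1)

theorem le_pairAffinity {μ0 μ1 : Measure Ω} {c : ℝ}
    (h : ∀ φ : Ω → ℝ, IsTest φ → c ≤ testRisk μ0 μ1 φ) : c ≤ pairAffinity μ0 μ1 := by
  refine le_csInf ⟨_, _, IsTest.const_zero, rfl⟩ ?_
  rintro _ ⟨φ, hφ, rfl⟩
  exact h φ hφ

theorem pairAffinity_le_one (μ0 μ1 : Measure Ω) [IsProbabilityMeasure μ1] :
    pairAffinity μ0 μ1 ≤ 1 := by
  simpa [testRisk] using pairAffinity_le_testRisk IsTest.const_zero μ0 μ1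

theorem pairAffinity_comm (μ0 μ1 : Measure Ω) : pairAffinity μ0 μ1 = pairAffinity μ1 μ0 := by
  have hle : ∀ μ0 μ1 : Measure Ω, pairAffinity μ0 μ1 ≤ pairAffinity μ1 μ0 := fun μ0 μ1 =>
    le_pairAffinity fun φ hφ => (pairAffinity_le_testRisk hφ.one_sub μ0 μ1).trans_eq <| by
      simp [testRisk, add_comm]
  exact le_antisymm (hle _ _) (hle _ _)

theorem one_add_mul_nonneg {e t : ℝ} (he : |e| ≤ 1) (ht : |t| ≤ 1) : 0 ≤ 1 + e * t := by
  have h : |e * t| ≤ 1 := by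
    rw [abs_mul]
    exact mul_le_one₀ he (abs_nonneg _) ht
  linarith [neg_le_of_abs_le h]

theorem abs_two_mul_sub_one_le_one {a : ℝ} (h0 : 0 ≤ a) (h1 : a ≤ 1) : |2 * a - 1| ≤ 1 :=
  abs_le.2 ⟨by linarith, by linarith⟩

theorem IsTest.lintegral_one_add_mul {φ : Ω → ℝ} (hφ : IsTest φ) (μ : Measure Ω)
    [IsProbabilityMeasure μ] {e : ℝ} (he : |e| ≤ 1) :
    ∫⁻ ω, ENNReal.ofReal (1 + e * (2 * φ ω - 1)) ∂μ
      = ENNReal.ofReal (1 + e * (2 * (∫ ω, φ ω ∂μ) - 1)) := by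
  have hφ2 : Integrable (fun ω => 2 * φ ω) μ := (hφ.integrable μ).const_mul 2
  have hint : Integrable (fun ω => e * (2 * φ ω - 1)) μ :=
    (hφ2.sub (integrable_const 1)).const_mul e
  have hsum : Integrable (fun ω => 1 + e * (2 * φ ω - 1)) μ := (integrable_const 1).add hint
  rw [← ofReal_integral_eq_lintegral_ofReal hsum
    (.of_forall fun ω => one_add_mul_nonneg he (abs_two_mul_sub_one_le_one (hφ.2 ω).1 (hφ.2 ω).2)),
    integral_add (integrable_const 1) hint, integral_const_mul,
    integral_sub hφ2 (integrable_const 1), integral_const_mul]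
  simp only [integral_const, probReal_univ, one_smul]

theorem IsTest.one_sub_sq_mul_le {φ : Ω → ℝ} (hφ : IsTest φ) {μ ν : Measure Ω}
    [IsProbabilityMeasure μ] [IsProbabilityMeasure ν] {c : NNReal} (hc : c ≤ fidelity μ ν) {e : ℝ}
    (he : |e| ≤ 1) :
    (1 - e ^ 2) * c ≤ (1 - e * ((∫ ω, φ ω ∂ν) - ∫ ω, φ ω ∂μ)) ^ 2 := by
  have he' : |-e| ≤ 1 := by rwa [abs_neg]
  have he2 : 0 ≤ 1 - e ^ 2 := sub_nonneg.2 ((sq_le_one_iff_abs_le_one e).2 he)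
  have habs : ∀ {a : ℝ}, a ∈ Set.Icc 0 1 → |2 * a - 1| ≤ 1 := fun h =>
    abs_two_mul_sub_one_le_one h.1 h.2
  have hmeas : ∀ s : ℝ, Measurable fun ω => ENNReal.ofReal (1 + s * (2 * φ ω - 1)) := fun s => by
    have := hφ.1
    fun_prop
  have hprod : ∀ ω, ((1 - e ^ 2).toNNReal : ℝ≥0∞)
      ≤ ENNReal.ofReal (1 + e * (2 * φ ω - 1)) * ENNReal.ofReal (1 + -e * (2 * φ ω - 1)) :=
    fun ω => by
      rw [← ENNReal.ofReal_mul (one_add_mul_nonneg he (habs (hφ.2 ω)))]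
      refine ENNReal.ofReal_le_ofReal ?_
      have ht := (sq_le_one_iff_abs_le_one _).2 (habs (hφ.2 ω))
      linarith [mul_le_of_le_one_right (sq_nonneg e) ht]
  have hfid := (mul_le_mul_right hc _).trans
    (mul_fidelity_le (μ := μ) (ν := ν) (hmeas e) (hmeas (-e)) hprod)
  have hnonneg := one_add_mul_nonneg he (habs (hφ.integral_mem_Icc μ))
  have hnonneg' := one_add_mul_nonneg he' (habs (hφ.integral_mem_Icc ν))
  rw [hφ.lintegral_one_add_mul μ he, hφ.lintegral_one_add_mul ν he', ← ENNReal.ofReal_mul hnonneg,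
    ← ENNReal.ofReal_coe_nnreal, ← ENNReal.ofReal_coe_nnreal, Real.coe_toNNReal _ he2,
    ← ENNReal.ofReal_mul he2, ENNReal.ofReal_le_ofReal_iff (mul_nonneg hnonneg hnonneg')] at hfid
  linarith [sq_nonneg (e * ((∫ ω, φ ω ∂μ) + (∫ ω, φ ω ∂ν) - 1))]

theorem add_sq_le_one_of_forall_mul_le {c d : ℝ} (hd : |d| ≤ 1)
    (h : ∀ e : ℝ, |e| ≤ 1 → (1 - e ^ 2) * c ≤ (1 - e * d) ^ 2) : c + d ^ 2 ≤ 1 := by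
  by_contra! hlt
  set s := c + d ^ 2
  have hd2 : d ^ 2 ≤ 1 := (sq_le_one_iff_abs_le_one d).2 hd
  have hcs : 0 < s - d ^ 2 := by linarith
  have hs0 : 0 < s := by linarith
  -- `e = d / (c + d ^ 2)` minimizes `(1 - e * d) ^ 2 - (1 - e ^ 2) * c`.
  have hoptimal := h (d / s) <| by
    rw [abs_div, abs_of_pos hs0]
    exact div_le_one_of_le₀ (by linarith) hs0.le
  have hc_eq : c = s - d ^ 2 := by linarith
  rw [hc_eq] at hoptimal
  field_simp at hoptimal
  nlinarith

theorem one_sub_pairAffinity_le_sqrt {μ ν : Measure Ω} [IsProbabilityMeasure μ]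
    [IsProbabilityMeasure ν] {c : NNReal} (hc : c ≤ fidelity μ ν) :
    1 - pairAffinity μ ν ≤ √(1 - c) := by
  rw [sub_le_comm]
  refine le_pairAffinity fun φ hφ => ?_
  obtain ⟨hμ0, hμ1⟩ := hφ.integral_mem_Icc μ
  obtain ⟨hν0, hν1⟩ := hφ.integral_mem_Icc ν
  have h := add_sq_le_one_of_forall_mul_le
    (abs_le.2 ⟨by linarith, by linarith⟩) fun e he => hφ.one_sub_sq_mul_le hc he
  rw [testRisk_eq_one_sub hφ]
  exact sub_le_sub_left (Real.le_sqrt_of_sq_le (by linarith)) 1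

end Testing

section SequentialLaw

theorem measurable_snoc (n : ℕ) :
    Measurable fun p : (Fin n → Z) × Z => (Fin.snoc p.1 p.2 : Fin (n + 1) → Z) := by
  refine measurable_pi_lambda _ fun i => ?_
  induction i using Fin.lastCases with
  | last => simpa only [Fin.snoc_last] using measurable_snd
  | cast i =>
    simp only [Fin.snoc_castSucc]
    fun_prop

/-- The law of `(Z₁, …, Zₙ)` when `Z_{i+1}` is drawn from `κ i` given the past `(Z₁, …, Zᵢ)`. -/
noncomputable def seqLaw (κ : (i : ℕ) → Kernel (Fin i → Z) Z) : (n : ℕ) → Measure (Fin n → Z)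
  | 0 => Measure.dirac fun i => i.elim0
  | n + 1 => (seqLaw κ n ⊗ₘ κ n).map fun p => Fin.snoc p.1 p.2

instance sFinite_seqLaw (κ : (i : ℕ) → Kernel (Fin i → Z) Z) (n : ℕ) : SFinite (seqLaw κ n) := by
  cases n <;> (unfold seqLaw; infer_instance)

theorem lintegral_seqLaw_succ (κ : (i : ℕ) → Kernel (Fin i → Z) Z) [∀ i, IsSFiniteKernel (κ i)]
    (n : ℕ) {g : (Fin (n + 1) → Z) → ℝ≥0∞} (hg : Measurable g) :
    ∫⁻ z, g z ∂seqLaw κ (n + 1) = ∫⁻ z, ∫⁻ z', g (Fin.snoc z z') ∂κ n z ∂seqLaw κ n := by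
  have hsnoc : Measurable fun p : (Fin n → Z) × Z => g (Fin.snoc p.1 p.2) :=
    hg.comp (measurable_snoc n)
  rw [seqLaw, lintegral_map hg (measurable_snoc n), Measure.lintegral_compProd hsnoc]

theorem pow_le_fidelity_seqLaw {κ₀ κ₁ : (i : ℕ) → Kernel (Fin i → Z) Z}
    [∀ i, IsSFiniteKernel (κ₀ i)] [∀ i, IsSFiniteKernel (κ₁ i)] {c : NNReal}
    (h : ∀ i z, c ≤ fidelity (κ₀ i z) (κ₁ i z)) (n : ℕ) :
    (c : ℝ≥0∞) ^ n ≤ fidelity (seqLaw κ₀ n) (seqLaw κ₁ n) := by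
  induction n with
  | zero => simpa only [pow_zero, seqLaw] using one_le_fidelity_self (Measure.dirac _)
  | succ n ih =>
    calc (c : ℝ≥0∞) ^ (n + 1) = c * c ^ n := pow_succ' _ n
      _ ≤ c * fidelity (seqLaw κ₀ n) (seqLaw κ₁ n) := by gcongr
      _ ≤ fidelity (seqLaw κ₀ n ⊗ₘ κ₀ n) (seqLaw κ₁ n ⊗ₘ κ₁ n) :=
        mul_fidelity_le_fidelity_compProd (h n)
      _ ≤ fidelity (seqLaw κ₀ (n + 1)) (seqLaw κ₁ (n + 1)) :=
        fidelity_le_fidelity_map (measurable_snoc n) _ _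

theorem seqLaw_const (P : Measure Z) [SigmaFinite P] (n : ℕ) :
    seqLaw (fun i => Kernel.const (Fin i → Z) P) n = Measure.pi fun _ => P := by
  induction n with
  | zero => rw [seqLaw, Measure.pi_of_empty _ fun i => i.elim0]
  | succ n ih =>
    have hpi := (measurePreserving_piFinSuccAbove (fun _ : Fin (n + 1) => P) (Fin.last n)).symm
    have hsnoc : (fun p : (Fin n → Z) × Z => (Fin.snoc p.1 p.2 : Fin (n + 1) → Z)) ∘ Prod.swap
        = (MeasurableEquiv.piFinSuccAbove (fun _ => Z) (Fin.last n)).symm :=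
      funext fun p => (Fin.insertNth_last' p.1 p.2).symm
    rw [seqLaw, ih, Measure.compProd_const, ← Measure.prod_swap,
      Measure.map_map (measurable_snoc n) measurable_swap, hsnoc]
    exact hpi.map_eq

theorem pow_le_fidelity_pi {P₀ P₁ : Measure Z} [SigmaFinite P₀] [SigmaFinite P₁] {c : NNReal}
    (h : c ≤ fidelity P₀ P₁) (n : ℕ) :
    (c : ℝ≥0∞) ^ n ≤ fidelity (Measure.pi fun _ : Fin n => P₀) (Measure.pi fun _ => P₁) := by
  simpa only [seqLaw_const] using pow_le_fidelity_seqLaw (κ₀ := fun i => Kernel.const _ P₀)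
    (κ₁ := fun i => Kernel.const _ P₁) (fun _ _ => h) n

theorem lintegral_pi_snoc (P : Measure X) [SigmaFinite P] (n : ℕ)
    {g : (Fin (n + 1) → X) → ℝ≥0∞} (hg : Measurable g) :
    ∫⁻ x, g x ∂(Measure.pi fun _ : Fin (n + 1) => P)
      = ∫⁻ x, ∫⁻ x', g (Fin.snoc x x') ∂P ∂(Measure.pi fun _ : Fin n => P) := by
  simpa only [seqLaw_const, Kernel.const_apply] using
    lintegral_seqLaw_succ (fun i => Kernel.const (Fin i → X) P) n hg

/-- The kernel `y ↦ ∫ K (x, y) P(dx)`: the first argument of `K` is drawn from `P`. -/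
noncomputable def avgKernel (P : Measure X) (K : Kernel (X × Ω) Z) : Kernel Ω Z :=
  K ∘ₖ (Kernel.const Ω P ×ₖ Kernel.id)

instance (P : Measure X) [SFinite P] (K : Kernel (X × Ω) Z) [IsSFiniteKernel K] :
    IsSFiniteKernel (avgKernel P K) := by
  unfold avgKernel
  infer_instance

instance (P : Measure X) [IsProbabilityMeasure P] (K : Kernel (X × Ω) Z) [IsMarkovKernel K] :
    IsMarkovKernel (avgKernel P K) := by
  unfold avgKernel
  infer_instance

theorem lintegral_avgKernel (P : Measure X) [SFinite P] (K : Kernel (X × Ω) Z) (y : Ω)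
    {g : Z → ℝ≥0∞} (hg : Measurable g) :
    ∫⁻ z, g z ∂avgKernel P K y = ∫⁻ x, ∫⁻ z, g z ∂K (x, y) ∂P := by
  have hK : Measurable fun p : X × Ω => ∫⁻ z, g z ∂K p := hg.lintegral_kernel
  rw [avgKernel, Kernel.lintegral_comp _ _ _ hg, Kernel.prod_apply, Kernel.const_apply,
    Kernel.id_apply, lintegral_prod _ hK.aemeasurable]
  exact lintegral_congr fun x => lintegral_dirac' _ (hK.comp measurable_prodMk_left)

theorem measurable_seqIntegral.{u} {X Y : Type u} [MeasurableSpace X] [MeasurableSpace Y]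
    (K : (i : ℕ) → Kernel (X × (Fin i → Z)) Z) [∀ i, IsSFiniteKernel (K i)] (n : ℕ)
    {G : Y → (Fin n → Z) → ℝ≥0∞} (hG : Measurable (Function.uncurry G)) :
    Measurable fun p : (Fin n → X) × Y => seqIntegral (fun i q => K i q) n p.1 (G p.2) := by
  induction n generalizing Y with
  | zero => exact hG.comp (measurable_snd.prodMk measurable_const)
  | succ n ih =>
    have hstep : Measurable (Function.uncurry fun (q : X × Y) (z : Fin n → Z) =>
        ∫⁻ z', G q.2 (Fin.snoc z z') ∂K n (q.1, z)) := by
      exact Measurable.lintegral_kernel_prod_right'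
        (κ := (K n).comap (fun q : (X × Y) × (Fin n → Z) => (q.1.1, q.2)) (by fun_prop))
        (hG.comp (f := fun r : ((X × Y) × (Fin n → Z)) × Z => (r.1.1.2, Fin.snoc r.1.2 r.2))
          (by
            have := measurable_snoc (Z := Z) n
            fun_prop))
    exact (ih hstep).comp (f := fun p : (Fin (n + 1) → X) × Y =>
      (fun i : Fin n => p.1 i.castSucc, (p.1 (Fin.last n), p.2))) (by fun_prop)

theorem lintegral_seqIntegral (K : (i : ℕ) → Kernel (X × (Fin i → Z)) Z)
    [∀ i, IsSFiniteKernel (K i)] (P : Measure X) [SigmaFinite P] (n : ℕ)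
    {g : (Fin n → Z) → ℝ≥0∞} (hg : Measurable g) :
    ∫⁻ x, seqIntegral (fun i q => K i q) n x g ∂(Measure.pi fun _ => P)
      = ∫⁻ z, g z ∂seqLaw (fun i => avgKernel P (K i)) n := by
  induction n with
  | zero =>
    rw [Measure.pi_of_empty _ fun i => i.elim0]
    simp only [seqIntegral, seqLaw, lintegral_const, measure_univ, mul_one, lintegral_dirac' _ hg]
  | succ n ih =>
    have hsnoc : Measurable fun r : (Fin n → Z) × Z => g (Fin.snoc r.1 r.2) :=
      hg.comp (measurable_snoc n)
    set G : X → (Fin n → Z) → ℝ≥0∞ := fun x z => ∫⁻ z', g (Fin.snoc z z') ∂K n (x, z)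
    have hG : Measurable (Function.uncurry G) :=
      Measurable.lintegral_kernel_prod_right' (κ := K n)
        (hsnoc.comp (f := fun r : (X × (Fin n → Z)) × Z => (r.1.2, r.2)) (by fun_prop))
    have hseq : Measurable fun x : Fin (n + 1) → X => seqIntegral (fun i q => K i q) (n + 1) x g :=
      (measurable_seqIntegral K (n + 1) (Y := PUnit) (G := fun _ => g)
        (hg.comp measurable_snd)).comp (measurable_prodMk_right (y := PUnit.unit))
    calc ∫⁻ x, seqIntegral (fun i q => K i q) (n + 1) x g ∂(Measure.pi fun _ => P)
        = ∫⁻ x, ∫⁻ x', seqIntegral (fun i q => K i q) n x (G x') ∂P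
            ∂(Measure.pi fun _ => P) := by
          rw [lintegral_pi_snoc P n hseq]
          simp only [seqIntegral, Fin.snoc_castSucc, Fin.snoc_last, G]
      _ = ∫⁻ x', ∫⁻ x, seqIntegral (fun i q => K i q) n x (G x') ∂(Measure.pi fun _ => P) ∂P :=
          lintegral_lintegral_swap (measurable_seqIntegral K n hG).aemeasurable
      _ = ∫⁻ x', ∫⁻ z, G x' z ∂seqLaw (fun i => avgKernel P (K i)) n ∂P :=
          lintegral_congr fun x' => ih (hG.comp measurable_prodMk_left)
      _ = ∫⁻ z, ∫⁻ x', G x' z ∂P ∂seqLaw (fun i => avgKernel P (K i)) n :=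
          lintegral_lintegral_swap hG.aemeasurable
      _ = ∫⁻ z, g z ∂seqLaw (fun i => avgKernel P (K i)) (n + 1) := by
          rw [lintegral_seqLaw_succ _ n hg]
          exact lintegral_congr fun z =>
            (lintegral_avgKernel P (K n) z (hsnoc.comp measurable_prodMk_left)).symm

end SequentialLaw

section TotalVariation

theorem abs_toReal_sub_le_dTV (P₀ P₁ : Measure Ω) [IsFiniteMeasure P₀] [IsFiniteMeasure P₁]
    {A : Set Ω} (hA : MeasurableSet A) : |(P₀ A).toReal - (P₁ A).toReal| ≤ dTV P₀ P₁ := by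
  refine le_ciSup (f := fun A : {A : Set Ω // MeasurableSet A} =>
    |(P₀ A.1).toReal - (P₁ A.1).toReal|) ⟨P₀.real Set.univ + P₁.real Set.univ, ?_⟩ ⟨A, hA⟩
  rintro _ ⟨A, rfl⟩
  have hP₀ : P₀.real A.1 ≤ P₀.real Set.univ := measureReal_mono (Set.subset_univ _)
  have hP₁ : P₁.real A.1 ≤ P₁.real Set.univ := measureReal_mono (Set.subset_univ _)
  calc |P₀.real A.1 - P₁.real A.1| ≤ |P₀.real A.1| + |P₁.real A.1| := abs_sub _ _
    _ ≤ P₀.real Set.univ + P₁.real Set.univ := by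
      rw [abs_of_nonneg measureReal_nonneg, abs_of_nonneg measureReal_nonneg]
      gcongr

theorem dTV_nonneg (P₀ P₁ : Measure Ω) : 0 ≤ dTV P₀ P₁ :=
  Real.iSup_nonneg fun _ => abs_nonneg _

theorem dTV_comm (P₀ P₁ : Measure Ω) : dTV P₀ P₁ = dTV P₁ P₀ := by
  simp only [dTV, abs_sub_comm]

theorem sub_le_ofReal_dTV (P₀ P₁ : Measure Ω) [IsFiniteMeasure P₀] [IsFiniteMeasure P₁]
    {A : Set Ω} (hA : MeasurableSet A) : P₀ A - P₁ A ≤ ENNReal.ofReal (dTV P₀ P₁) := by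
  rw [← ENNReal.ofReal_toReal (measure_ne_top P₀ A), ← ENNReal.ofReal_toReal (measure_ne_top P₁ A),
    ← ENNReal.ofReal_sub _ ENNReal.toReal_nonneg]
  exact ENNReal.ofReal_le_ofReal ((le_abs_self _).trans (abs_toReal_sub_le_dTV P₀ P₁ hA))

theorem exists_le_add_of_dTV (P₀ P₁ : Measure Ω) [IsFiniteMeasure P₀] [IsFiniteMeasure P₁] :
    ∃ D : Measure Ω, P₀ ≤ P₁ + D ∧ D Set.univ ≤ ENNReal.ofReal (dTV P₀ P₁) := by
  obtain ⟨S, hS, hS_le, hSc_le⟩ := hahn_decomposition P₀ P₁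
  have hres : P₁.restrict S ≤ P₀.restrict S := Measure.le_iff.2 fun A hA => by
    simpa only [Measure.restrict_apply hA] using hS_le _ (hA.inter hS) Set.inter_subset_right
  have hres_compl : P₀.restrict Sᶜ ≤ P₁.restrict Sᶜ := Measure.le_iff.2 fun A hA => by
    simpa only [Measure.restrict_apply hA] using hSc_le _ (hA.inter hS.compl) Set.inter_subset_right
  refine ⟨P₀.restrict S - P₁.restrict S, ?_, ?_⟩
  · calc P₀ = P₀.restrict S + P₀.restrict Sᶜ := (Measure.restrict_add_restrict_compl hS).symm
      _ ≤ P₀.restrict S + P₁.restrict Sᶜ := by gcongr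
      _ = (P₀.restrict S - P₁.restrict S + P₁.restrict S) + P₁.restrict Sᶜ := by
        rw [Measure.sub_add_cancel_of_le hres]
      _ = P₁ + (P₀.restrict S - P₁.restrict S) := by
        rw [add_assoc, Measure.restrict_add_restrict_compl hS, add_comm]
  · rw [Measure.sub_apply .univ hres, Measure.restrict_apply_univ, Measure.restrict_apply_univ]
    exact sub_le_ofReal_dTV P₀ P₁ hS

theorem lintegral_le_add_mul_dTV (P₀ P₁ : Measure X) [IsProbabilityMeasure P₀]
    [IsProbabilityMeasure P₁] (P₂ : Measure X) [IsProbabilityMeasure P₂] {k : X → ℝ≥0∞} {E : ℝ≥0∞}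
    (hE : E ≠ ∞) (hk : ∀ x x', k x ≤ E * k x') :
    ∫⁻ x, k x ∂P₀
      ≤ ∫⁻ x, k x ∂P₁ + (E - 1) * ENNReal.ofReal (dTV P₀ P₁) * ∫⁻ x, k x ∂P₂ := by
  have : Nonempty X := P₂.nonempty_of_neZero
  obtain ⟨D, hD, hD_univ⟩ := exists_le_add_of_dTV P₀ P₁
  -- Only the part of `k` above its infimum `m`, which is at most `(E - 1) * m`, feels the change.
  set m := ⨅ x, k x
  have hm : ∀ x, m ≤ k x := iInf_le k
  have hkm : ∀ x, k x - m ≤ (E - 1) * m := fun x => by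
    rw [tsub_le_iff_right]
    calc k x ≤ E * m := by
          rw [ENNReal.mul_iInf fun h => absurd h hE]
          exact le_iInf (hk x)
      _ ≤ (E - 1 + 1) * m := by gcongr; exact le_tsub_add
      _ = (E - 1) * m + m := by ring
  have hsplit : ∀ (μ : Measure X) [IsProbabilityMeasure μ],
      ∫⁻ x, k x ∂μ = m + ∫⁻ x, (k x - m) ∂μ := fun μ _ => by
    calc ∫⁻ x, k x ∂μ = ∫⁻ x, (m + (k x - m)) ∂μ :=
          lintegral_congr fun x => (add_tsub_cancel_of_le (hm x)).symm
      _ = m + ∫⁻ x, (k x - m) ∂μ := by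
          rw [lintegral_add_left measurable_const, lintegral_const, measure_univ, mul_one]
  calc ∫⁻ x, k x ∂P₀ = m + ∫⁻ x, (k x - m) ∂P₀ := hsplit P₀
    _ ≤ m + (∫⁻ x, (k x - m) ∂P₁ + ∫⁻ x, (k x - m) ∂D) := by
      rw [← lintegral_add_measure]
      gcongr
    _ = ∫⁻ x, k x ∂P₁ + ∫⁻ x, (k x - m) ∂D := by rw [hsplit P₁, add_assoc]
    _ ≤ ∫⁻ x, k x ∂P₁ + (E - 1) * m * D Set.univ := by
      rw [← lintegral_const]
      gcongr
      exact hkm _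
    _ ≤ ∫⁻ x, k x ∂P₁ + (E - 1) * ENNReal.ofReal (dTV P₀ P₁) * ∫⁻ x, k x ∂P₂ := by
      have : m ≤ ∫⁻ x, k x ∂P₂ := by
        rw [hsplit P₂]
        exact le_self_add
      rw [mul_right_comm]
      gcongr

theorem avgKernel_le_add_smul (P₀ P₁ P₂ : Measure X) [IsProbabilityMeasure P₀]
    [IsProbabilityMeasure P₁] [IsProbabilityMeasure P₂] {K : Kernel (X × Ω) Z} {E : NNReal} {y : Ω}
    (hK : ∀ x x' A, MeasurableSet A → K (x, y) A ≤ E * K (x', y) A) :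
    avgKernel P₀ K y
      ≤ avgKernel P₁ K y + ((E - 1) * (dTV P₀ P₁).toNNReal) • avgKernel P₂ K y := by
  refine Measure.le_iff.2 fun A hA => ?_
  have havg : ∀ (P : Measure X) [IsProbabilityMeasure P],
      avgKernel P K y A = ∫⁻ x, K (x, y) A ∂P := fun P _ => by
    simpa only [lintegral_indicator_const hA, one_mul] using
      lintegral_avgKernel P K y ((measurable_const (a := (1 : ℝ≥0∞))).indicator hA)
  rw [Measure.add_apply, Measure.smul_apply, havg, havg, havg]
  exact lintegral_le_add_mul_dTV P₀ P₁ P₂ ENNReal.coe_ne_top fun x x' => hK x x' A hA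

end TotalVariation

section PrivateChannel

theorem one_sub_sq_le_fidelity_avgKernel (P₀ P₁ : Measure X) [IsProbabilityMeasure P₀]
    [IsProbabilityMeasure P₁] {K : Kernel (X × Ω) Z} [IsMarkovKernel K] {E : NNReal} {y : Ω}
    (hK : ∀ x x' A, MeasurableSet A → K (x, y) A ≤ E * K (x', y) A) :
    ((1 - ((E - 1) * (dTV P₀ P₁).toNNReal) ^ 2 : NNReal) : ℝ≥0∞)
      ≤ fidelity (avgKernel P₀ K y) (avgKernel P₁ K y) :=
  one_sub_sq_le_fidelity (dTV_comm P₀ P₁ ▸ avgKernel_le_add_smul P₁ P₀ P₀ hK)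
    (avgKernel_le_add_smul P₀ P₁ P₀ hK)

theorem isProbabilityMeasure_privProd {Zn : Type*} [MeasurableSpace Zn] {n : ℕ}
    (Q : Kernel (Fin n → X) Zn) [IsMarkovKernel Q] (P : Measure X) [IsProbabilityMeasure P] :
    IsProbabilityMeasure (privProd n (fun x => Q x) P) :=
  inferInstanceAs (IsProbabilityMeasure ((Measure.pi fun _ => P).bind Q))

theorem privProd_eq_seqLaw {n : ℕ} {Q : Kernel (Fin n → X) (Fin n → Z)}
    {K : (i : ℕ) → Kernel (X × (Fin i → Z)) Z} [∀ i, IsSFiniteKernel (K i)]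
    (hQ : ∀ (x : Fin n → X) (A : Set (Fin n → Z)), MeasurableSet A →
      Q x A = seqIntegral (fun i p => K i p) n x (A.indicator fun _ => 1))
    (P : Measure X) [SigmaFinite P] :
    privProd n (fun x => Q x) P = seqLaw (fun i => avgKernel P (K i)) n := by
  ext A hA
  rw [privProd, Measure.bind_apply hA Q.aemeasurable, lintegral_congr fun x => hQ x A hA,
    lintegral_seqIntegral K P n (measurable_const.indicator hA), lintegral_indicator_const hA,
    one_mul]

theorem IsSeqInteractive.pow_le_fidelity_privProd {n : ℕ} {α : ℝ}
    {Q : Kernel (Fin n → X) (Fin n → Z)} (hQ : IsSeqInteractive n α Q) (P₀ P₁ : Measure X)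
    [IsProbabilityMeasure P₀] [IsProbabilityMeasure P₁] :
    ((1 - (((Real.exp α).toNNReal - 1) * (dTV P₀ P₁).toNNReal) ^ 2 : NNReal) : ℝ≥0∞) ^ n
      ≤ fidelity (privProd n (fun x => Q x) P₀) (privProd n (fun x => Q x) P₁) := by
  obtain ⟨K, hmarkov, hratio, hlaw⟩ := hQ
  rw [privProd_eq_seqLaw hlaw, privProd_eq_seqLaw hlaw]
  exact pow_le_fidelity_seqLaw (fun i z => one_sub_sq_le_fidelity_avgKernel P₀ P₁
    fun x x' A hA => hratio i x x' z A hA) n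

theorem sqrt_one_sub_one_sub_sq_pow_le (δ : NNReal) (n : ℕ) :
    √(1 - ((1 - δ ^ 2) ^ n : NNReal)) ≤ √n * δ := by
  have hsub : 1 - (δ : ℝ) ^ 2 ≤ (1 - δ ^ 2 : NNReal) := by
    rw [NNReal.coe_sub_def]
    exact le_max_left _ _
  have hbernoulli := one_add_mul_sub_le_pow
    (neg_one_lt_zero.le.trans (1 - δ ^ 2 : NNReal).coe_nonneg) n
  have hmul : (n : ℝ) * (1 - δ ^ 2 - 1) ≤ n * ((1 - δ ^ 2 : NNReal) - 1) := by gcongr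
  refine Real.sqrt_le_iff.2 ⟨by positivity, ?_⟩
  rw [mul_pow, Real.sq_sqrt n.cast_nonneg, NNReal.coe_pow]
  linarith

theorem IsSeqInteractive.one_sub_pairAffinity_le {n : ℕ} {α : ℝ}
    {Q : Kernel (Fin n → X) (Fin n → Z)} [IsMarkovKernel Q] (hQ : IsSeqInteractive n α Q)
    (P₀ P₁ : Measure X) [IsProbabilityMeasure P₀] [IsProbabilityMeasure P₁] :
    1 - pairAffinity (privProd n (fun x => Q x) P₀) (privProd n (fun x => Q x) P₁)
      ≤ √n * (|Real.exp α - 1| * dTV P₀ P₁) := by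
  have := isProbabilityMeasure_privProd Q P₀
  have := isProbabilityMeasure_privProd Q P₁
  have hfid := hQ.pow_le_fidelity_privProd P₀ P₁
  set δ : NNReal := ((Real.exp α).toNNReal - 1) * (dTV P₀ P₁).toNNReal
  have hδ : (δ : ℝ) ≤ |Real.exp α - 1| * dTV P₀ P₁ := by
    rw [NNReal.coe_mul, NNReal.coe_sub_def, Real.coe_toNNReal _ (Real.exp_pos α).le,
      Real.coe_toNNReal _ (dTV_nonneg P₀ P₁)]
    exact mul_le_mul_of_nonneg_right (max_le (le_abs_self _) (abs_nonneg _)) (dTV_nonneg P₀ P₁)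
  calc 1 - pairAffinity (privProd n (fun x => Q x) P₀) (privProd n (fun x => Q x) P₁)
      ≤ √(1 - ((1 - δ ^ 2) ^ n : NNReal)) :=
        one_sub_pairAffinity_le_sqrt (by rwa [ENNReal.coe_pow])
    _ ≤ √n * δ := sqrt_one_sub_one_sub_sq_pow_le δ n
    _ ≤ √n * (|Real.exp α - 1| * dTV P₀ P₁) := by gcongr

theorem IsSeqInteractive.ofReal_le_gDist_dTV {n : ℕ} {α η : ℝ}
    {Q : Kernel (Fin n → X) (Fin n → Z)} [IsMarkovKernel Q] (hQ : IsSeqInteractive n α Q)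
    {P : Set (Measure X)} (hP : ∀ μ ∈ P, IsProbabilityMeasure μ) :
    ENNReal.ofReal ((1 - η) / √(2 * n * (Real.exp α - 1) ^ 2))
      ≤ gDist dTV (privProd n fun x => Q x) P η := by
  refine le_iInf₂ fun P₀ hP₀ => le_iInf₂ fun P₁ hP₁ => le_iInf fun hη => ?_
  have := hP P₀ hP₀
  have := hP P₁ hP₁
  refine ENNReal.ofReal_le_ofReal (div_le_of_le_mul₀ (Real.sqrt_nonneg _) (dTV_nonneg P₀ P₁) ?_)
  have hle : √n * |Real.exp α - 1| ≤ √(2 * n * (Real.exp α - 1) ^ 2) := by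
    rw [Real.sqrt_mul (by positivity), Real.sqrt_sq_eq_abs]
    gcongr
    linarith [n.cast_nonneg (α := ℝ)]
  calc 1 - η ≤ 1 - pairAffinity (privProd n (fun x => Q x) P₀) (privProd n (fun x => Q x) P₁) :=
        sub_le_sub_left hη 1
    _ ≤ √n * |Real.exp α - 1| * dTV P₀ P₁ := by
        rw [mul_assoc]
        exact hQ.one_sub_pairAffinity_le P₀ P₁
    _ ≤ dTV P₀ P₁ * √(2 * n * (Real.exp α - 1) ^ 2) := by
        rw [mul_comm]
        exact mul_le_mul_of_nonneg_left hle (dTV_nonneg P₀ P₁)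

end PrivateChannel

section Hellinger

theorem hellingerAffinity_nonneg (P₀ P₁ : Measure Ω) : 0 ≤ hellingerAffinity P₀ P₁ :=
  integral_nonneg fun _ => Real.sqrt_nonneg _

theorem dH_nonneg (P₀ P₁ : Measure Ω) : 0 ≤ dH P₀ P₁ :=
  Real.sqrt_nonneg _

theorem integrable_sqrt_mul {f g : Ω → ℝ} {μ : Measure Ω} (hf : Integrable f μ)
    (hg : Integrable g μ) (hf0 : 0 ≤ f) (hg0 : 0 ≤ g) : Integrable (fun ω => √(f ω * g ω)) μ := by
  refine (hf.add hg).mono' (Real.continuous_sqrt.comp_aestronglyMeasurable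
    (hf.aestronglyMeasurable.mul hg.aestronglyMeasurable)) (.of_forall fun ω => ?_)
  rw [Real.norm_of_nonneg (Real.sqrt_nonneg _), Real.sqrt_le_iff]
  exact ⟨add_nonneg (hf0 ω) (hg0 ω), by
    simp only [Pi.add_apply]
    nlinarith [mul_nonneg (hf0 ω) (hg0 ω), sq_nonneg (f ω), sq_nonneg (g ω)]⟩

theorem sq_sqrt_sub_sqrt {a b : ℝ} (ha : 0 ≤ a) (hb : 0 ≤ b) :
    (√a - √b) ^ 2 = a + b - 2 * √(a * b) := by
  rw [sub_sq, Real.sq_sqrt ha, Real.sq_sqrt hb, Real.sqrt_mul ha]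
  ring

theorem sq_dH (P₀ P₁ : Measure Ω) [IsProbabilityMeasure P₀] [IsProbabilityMeasure P₁] :
    dH P₀ P₁ ^ 2 = 2 * (1 - hellingerAffinity P₀ P₁) := by
  have h₀ : P₀ ≪ P₀ + P₁ := Measure.absolutelyContinuous_of_le (Measure.le_add_right le_rfl)
  have h₁ : P₁ ≪ P₀ + P₁ := Measure.absolutelyContinuous_of_le (Measure.le_add_left le_rfl)
  have hint : ∀ P : Measure Ω, [IsProbabilityMeasure P] →
      Integrable (fun ω => (P.rnDeriv (P₀ + P₁) ω).toReal) (P₀ + P₁) :=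
    fun _ _ => Measure.integrable_toReal_rnDeriv
  have hadd : Integrable (fun ω =>
      (P₀.rnDeriv (P₀ + P₁) ω).toReal + (P₁.rnDeriv (P₀ + P₁) ω).toReal) (P₀ + P₁) :=
    (hint P₀).add (hint P₁)
  have hsqrt := integrable_sqrt_mul (hint P₀) (hint P₁) (fun _ => ENNReal.toReal_nonneg)
    fun _ => ENNReal.toReal_nonneg
  rw [dH, Real.sq_sqrt (integral_nonneg fun _ => sq_nonneg _)]
  simp only [sq_sqrt_sub_sqrt ENNReal.toReal_nonneg ENNReal.toReal_nonneg]
  rw [integral_sub hadd (hsqrt.const_mul 2), integral_add (hint P₀) (hint P₁),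
    integral_const_mul, Measure.integral_toReal_rnDeriv h₀, Measure.integral_toReal_rnDeriv h₁,
    probReal_univ, probReal_univ, hellingerAffinity]
  ring

theorem one_sub_pairAffinity_le_sqrt_hellingerAffinity {Zn : Type*} [MeasurableSpace Zn] {n : ℕ}
    (R : Kernel (Fin n → X) Zn) [IsMarkovKernel R] (P₀ P₁ : Measure X) [IsProbabilityMeasure P₀]
    [IsProbabilityMeasure P₁] :
    1 - pairAffinity (privProd n (fun x => R x) P₀) (privProd n (fun x => R x) P₁)
      ≤ √(1 - (hellingerAffinity P₀ P₁ ^ 2) ^ n) := by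
  have := isProbabilityMeasure_privProd R P₀
  have := isProbabilityMeasure_privProd R P₁
  set ρ := hellingerAffinity P₀ P₁
  have hρ : (((ρ ^ 2).toNNReal : NNReal) : ℝ≥0∞) ≤ fidelity P₀ P₁ := by
    have h := sq_hellingerAffinity_le_fidelity P₀ P₁
    rwa [← ENNReal.ofReal_pow (hellingerAffinity_nonneg P₀ P₁)] at h
  have hfid := (pow_le_fidelity_pi hρ n).trans (fidelity_le_fidelity_bind _ _ R)
  have h := one_sub_pairAffinity_le_sqrt (by rwa [← ENNReal.coe_pow] at hfid)
  rwa [NNReal.coe_pow, Real.coe_toNNReal _ (sq_nonneg ρ)] at h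

theorem two_mul_one_sub_le_neg_log {η : ℝ} (h0 : 0 < η) (h1 : η ≤ 1) :
    2 * (1 - η) ≤ (1 + η) * -Real.log η := by
  have hlog := Real.le_log_one_add_of_nonneg (sub_nonneg.2 (one_le_inv_iff₀.2 ⟨h0, h1⟩))
  have hdiv : 2 * (η⁻¹ - 1) / (η⁻¹ - 1 + 2) = 2 * (1 - η) / (1 + η) := by
    rw [div_eq_div_iff (by linarith [inv_pos.2 h0]) (by linarith)]
    field_simp
    ring
  rwa [add_sub_cancel, Real.log_inv, hdiv, div_le_iff₀' (by linarith)] at hlog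

theorem one_sub_one_sub_sq_le_exp {η : ℝ} (h0 : 0 < η) (h1 : η ≤ 1) :
    1 - (1 - η) ^ 2 ≤ Real.exp ((1 - η) / 2 * Real.log η) := by
  have hlog := Real.log_le_sub_one_of_pos (show 0 < 2 - η by linarith)
  calc 1 - (1 - η) ^ 2 = η * (2 - η) := by ring
    _ = Real.exp (Real.log η + Real.log (2 - η)) := by
      rw [Real.exp_add, Real.exp_log h0, Real.exp_log (by linarith)]
    _ ≤ Real.exp ((1 - η) / 2 * Real.log η) := by
      gcongr
      linarith [two_mul_one_sub_le_neg_log h0 h1]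

theorem div_add_le_one_sub_of_pow_le_exp {x y : ℝ} {m : ℕ} (hm : m ≠ 0) (hy : 0 ≤ y)
    (hx : x ^ m ≤ Real.exp (-y)) : y / (m + y) ≤ 1 - x := by
  have hm0 : (0 : ℝ) < m := by positivity
  have hpow : x ^ m ≤ Real.exp (-(y / m)) ^ m := by
    rwa [← Real.exp_nat_mul, mul_neg, mul_div_cancel₀ _ hm0.ne']
  have hle : x ≤ Real.exp (-(y / m)) := le_of_pow_le_pow_left₀ hm (Real.exp_pos _).le hpow
  have hinv : Real.exp (-(y / m)) ≤ (y / m + 1)⁻¹ := by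
    rw [Real.exp_neg]
    exact inv_anti₀ (by positivity) (Real.add_one_le_exp _)
  calc y / (m + y) = 1 - (y / m + 1)⁻¹ := by field_simp; ring
    _ ≤ 1 - x := sub_le_sub_left (hle.trans hinv) 1

theorem div_add_le_sq_dH {Zn : Type*} [MeasurableSpace Zn] {n : ℕ} (hn : n ≠ 0)
    (R : Kernel (Fin n → X) Zn) [IsMarkovKernel R] {P₀ P₁ : Measure X} [IsProbabilityMeasure P₀]
    [IsProbabilityMeasure P₁] {η y : ℝ} (h0 : 0 < η) (h1 : η < 1)
    (hη : pairAffinity (privProd n (fun x => R x) P₀) (privProd n (fun x => R x) P₁) ≤ η)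
    (hy0 : 0 ≤ y) (hy : y ≤ (1 - η) / 2 * |Real.log η|) :
    2 * (y / (2 * n + y)) ≤ dH P₀ P₁ ^ 2 := by
  have hsqrt : (1 - η) ^ 2 ≤ 1 - (hellingerAffinity P₀ P₁ ^ 2) ^ n :=
    (Real.le_sqrt' (by linarith)).1 <|
      (sub_le_sub_left hη 1).trans (one_sub_pairAffinity_le_sqrt_hellingerAffinity R P₀ P₁)
  have hpow : hellingerAffinity P₀ P₁ ^ (2 * n) ≤ Real.exp (-y) := by
    calc hellingerAffinity P₀ P₁ ^ (2 * n) ≤ 1 - (1 - η) ^ 2 := by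
          rw [pow_mul]
          linarith
      _ ≤ Real.exp ((1 - η) / 2 * Real.log η) := one_sub_one_sub_sq_le_exp h0 h1.le
      _ ≤ Real.exp (-y) := by
          rw [abs_of_nonpos (Real.log_nonpos h0.le h1.le), mul_neg] at hy
          exact Real.exp_le_exp.2 (le_neg_of_le_neg hy)
  have h := div_add_le_one_sub_of_pow_le_exp (by positivity) hy0 hpow
  push_cast at h
  rw [sq_dH]
  gcongr

/-- The constant `c` in the Hellinger bound `g_H ≥ c √(|log η| / n)`. With `κ = (1 - η₀) / 2` it is
the square root of `2 κ / (2 + κ ε₀)`, which bounds `2 κ / (2 + κ |log η| / n)` from below. -/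
noncomputable def hellingerConst (η₀ ε₀ : ℝ) : ℝ :=
  √(2 * (1 - η₀) / (4 + (1 - η₀) * ε₀))

theorem hellingerConst_pos {η₀ ε₀ : ℝ} (hη₀ : η₀ < 1) (hε₀ : 0 < ε₀) :
    0 < hellingerConst η₀ ε₀ := by
  have := sub_pos.2 hη₀
  exact Real.sqrt_pos.2 (by positivity)

theorem ofReal_le_gDist_dH {Zn : Type*} [MeasurableSpace Zn] {n : ℕ}
    (R : Kernel (Fin n → X) Zn) [IsMarkovKernel R] {P : Set (Measure X)}
    (hP : ∀ μ ∈ P, IsProbabilityMeasure μ) {η η₀ ε₀ : ℝ} (h0 : 0 < η) (hη : η < η₀) (hη₀ : η₀ < 1)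
    (hε₀ : 0 < ε₀) (hn : |Real.log η| / ε₀ < n) :
    ENNReal.ofReal (hellingerConst η₀ ε₀ * √(|Real.log η| / n))
      ≤ gDist dH (privProd n fun x => R x) P η := by
  refine le_iInf₂ fun P₀ hP₀ => le_iInf₂ fun P₁ hP₁ => le_iInf fun hη_aff => ?_
  have := hP P₀ hP₀
  have := hP P₁ hP₁
  have hn0 : (0 : ℝ) < n := (by positivity : 0 ≤ |Real.log η| / ε₀).trans_lt hn
  have hκ := sub_pos.2 hη₀
  have hlog : |Real.log η| ≤ n * ε₀ := ((div_lt_iff₀ hε₀).1 hn).le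
  have hdH := div_add_le_sq_dH (Nat.cast_pos.1 hn0).ne' R h0 (hη.trans hη₀) hη_aff
    (y := (1 - η₀) / 2 * |Real.log η|) (by positivity) (by gcongr)
  refine ENNReal.ofReal_le_ofReal ?_
  rw [hellingerConst, ← Real.sqrt_mul (by positivity), Real.sqrt_le_left (dH_nonneg P₀ P₁)]
  calc 2 * (1 - η₀) / (4 + (1 - η₀) * ε₀) * (|Real.log η| / n)
      = 2 * ((1 - η₀) / 2 * |Real.log η| / (2 * n + (1 - η₀) / 2 * (n * ε₀))) := by
        field_simp
        ring
    _ ≤ 2 * ((1 - η₀) / 2 * |Real.log η| / (2 * n + (1 - η₀) / 2 * |Real.log η|)) := by gcongr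
    _ ≤ dH P₀ P₁ ^ 2 := hdH

end Hellinger

section UpperAffinity

theorem subset_convComb (M : Set (Measure Ω)) : M ⊆ convComb M := fun μ hμ =>
  ⟨1, fun _ => 1, fun _ => μ, by rw [Fin.sum_univ_one], fun _ => hμ,
    by rw [Fin.sum_univ_one, one_smul]⟩

theorem isProbabilityMeasure_of_mem_convComb {M : Set (Measure Ω)}
    (hM : ∀ μ ∈ M, IsProbabilityMeasure μ) {μ : Measure Ω} (hμ : μ ∈ convComb M) :
    IsProbabilityMeasure μ := by
  obtain ⟨m, w, ν, hw, hν, rfl⟩ := hμ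
  have hν_univ : ∀ i, ν i Set.univ = 1 := fun i => (hM _ (hν i)).measure_univ
  constructor
  simp only [Measure.finsetSum_apply, Measure.smul_apply, hν_univ, smul_eq_mul, mul_one, hw]

theorem pairAffinity_le_one_of_mem {M₀ M₁ : Set (Measure Ω)}
    (hM₁ : ∀ μ ∈ M₁, IsProbabilityMeasure μ) :
    ∀ r ∈ {r : ℝ | ∃ μ₀ ∈ M₀, ∃ μ₁ ∈ M₁, r = pairAffinity μ₀ μ₁}, r ≤ 1 := by
  rintro _ ⟨μ₀, -, μ₁, hμ₁, rfl⟩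
  have := hM₁ μ₁ hμ₁
  exact pairAffinity_le_one μ₀ μ₁

theorem setAffinity_le_one (M₀ : Set (Measure Ω)) {M₁ : Set (Measure Ω)}
    (hM₁ : ∀ μ ∈ M₁, IsProbabilityMeasure μ) : setAffinity M₀ M₁ ≤ 1 :=
  Real.sSup_le (pairAffinity_le_one_of_mem hM₁) zero_le_one

theorem pairAffinity_le_setAffinity {M₀ M₁ : Set (Measure Ω)}
    (hM₁ : ∀ μ ∈ M₁, IsProbabilityMeasure μ) {μ₀ μ₁ : Measure Ω} (h₀ : μ₀ ∈ M₀) (h₁ : μ₁ ∈ M₁) :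
    pairAffinity μ₀ μ₁ ≤ setAffinity M₀ M₁ :=
  le_csSup ⟨1, pairAffinity_le_one_of_mem hM₁⟩ ⟨μ₀, h₀, μ₁, h₁, rfl⟩

variable {QPn : Measure X → Measure Ω} {P : Set (Measure X)} {θ : Measure X → ℝ} {η : ℝ}

theorem pairAffinity_le_etaA (hQ : ∀ μ ∈ P, IsProbabilityMeasure (QPn μ)) {P₀ P₁ : Measure X}
    (h₀ : P₀ ∈ P) (h₁ : P₁ ∈ P) :
    pairAffinity (QPn P₀) (QPn P₁) ≤ etaA QPn P θ (θ P₁ - θ P₀) := by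
  have hprob : ∀ t, ∀ μ ∈ convComb (QPn '' {μ | μ ∈ P ∧ t + (θ P₁ - θ P₀) ≤ θ μ}),
      IsProbabilityMeasure μ := fun t μ =>
    isProbabilityMeasure_of_mem_convComb <| Set.forall_mem_image.2 fun μ hμ => hQ μ hμ.1
  have hbdd : BddAbove (Set.range fun t => setAffinity (convComb (QPn '' {μ | μ ∈ P ∧ θ μ ≤ t}))
      (convComb (QPn '' {μ | μ ∈ P ∧ t + (θ P₁ - θ P₀) ≤ θ μ}))) :=
    ⟨1, Set.forall_mem_range.2 fun t => setAffinity_le_one _ (hprob t)⟩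
  refine (pairAffinity_le_setAffinity (hprob (θ P₀)) ?_ ?_).trans (le_ciSup hbdd (θ P₀))
  · exact subset_convComb _ (Set.mem_image_of_mem _ ⟨h₀, le_rfl⟩)
  · exact subset_convComb _ (Set.mem_image_of_mem _ ⟨h₁, (add_sub_cancel _ _).le⟩)

theorem ofReal_sub_le_DeltaA (hQ : ∀ μ ∈ P, IsProbabilityMeasure (QPn μ)) {P₀ P₁ : Measure X}
    (h₀ : P₀ ∈ P) (h₁ : P₁ ∈ P) (hη : η < pairAffinity (QPn P₀) (QPn P₁)) :
    ENNReal.ofReal (θ P₁ - θ P₀) ≤ DeltaA QPn P θ η := by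
  rcases le_total (θ P₁ - θ P₀) 0 with hneg | hpos
  · rw [ENNReal.ofReal_of_nonpos hneg]
    exact zero_le
  · exact le_iSup₂_of_le _ hpos (le_iSup_of_le (hη.trans_le (pairAffinity_le_etaA hQ h₀ h₁)) le_rfl)

theorem ofReal_abs_sub_le_DeltaA (hQ : ∀ μ ∈ P, IsProbabilityMeasure (QPn μ)) {P₀ P₁ : Measure X}
    (h₀ : P₀ ∈ P) (h₁ : P₁ ∈ P) (hη : η < pairAffinity (QPn P₀) (QPn P₁)) :
    ENNReal.ofReal |θ P₀ - θ P₁| ≤ DeltaA QPn P θ η := by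
  rcases abs_choice (θ P₀ - θ P₁) with h | h <;> rw [h]
  · exact ofReal_sub_le_DeltaA hQ h₁ h₀ (by rwa [pairAffinity_comm])
  · rw [neg_sub]
    exact ofReal_sub_le_DeltaA hQ h₀ h₁ hη

theorem lt_pairAffinity_of_lt_gDist {d : Measure X → Measure X → ℝ} {P₀ P₁ : Measure X}
    (h₀ : P₀ ∈ P) (h₁ : P₁ ∈ P) (hd : ENNReal.ofReal (d P₀ P₁) < gDist d QPn P η) :
    η < pairAffinity (QPn P₀) (QPn P₁) := by
  by_contra! hle
  exact hd.not_ge <| iInf₂_le_of_le P₀ h₀ <| iInf₂_le_of_le P₁ h₁ <| iInf_le _ hle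

theorem leftLimE_modulus_le_DeltaA (hQ : ∀ μ ∈ P, IsProbabilityMeasure (QPn μ))
    {d : Measure X → Measure X → ℝ} {m : ℝ≥0∞} (hm : m ≤ gDist d QPn P η) :
    leftLimE (modulus d P θ) m ≤ DeltaA QPn P θ η := by
  refine iSup₂_le fun ε _ => iSup_le fun hε => iSup₂_le fun P₀ h₀ => iSup₂_le fun P₁ h₁ =>
    iSup_le fun hd =>
      ofReal_abs_sub_le_DeltaA hQ h₀ h₁ (lt_pairAffinity_of_lt_gDist h₀ h₁ (d := d) ?_)
  exact (ENNReal.ofReal_le_ofReal hd).trans_lt (hε.trans_le hm)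

end UpperAffinity

/-- lower bounds on `g_TV`, `g_H` and `Δ_A` for private channels.
(i) For an `α`-sequentially interactive channel `Q`,
`g_TV(Q,η) ≥ (1-η)/√(2n(e^α-1)²)` and consequently
`Δ_A^{(n)}(Q,η) ≥ ω_TV(((1-η)/√(2n(e^α-1)²))⁻)`.
(ii) For all `η0 ∈ (0,1)`, `ε0 > 0` there is `c > 0` such that for all `η ∈ (0,η0)`,
all `n > |log η|/ε0` and every channel `R`, `g_H(R,η) ≥ c√(|log η|/n)`; consequently, for
such `η`, `n` and every `α`-sequentially interactive channel `Q`,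
`Δ_A^{(n)}(Q,η) ≥ max{ω_TV(((1-η)/√(2n(e^α-1)²))⁻), ω_H((c√(|log η|/n))⁻)}`. -/
theorem statement4 {X Z : Type*} [MeasurableSpace X] [MeasurableSpace Z]
    (P : Set (Measure X)) (hP : ∀ μ ∈ P, IsProbabilityMeasure μ) (θ : Measure X → ℝ)
    (n : ℕ) (hn : 0 < n) (η : ℝ) (hη0 : 0 < η) (hη1 : η < 1) (α : ℝ) (hα : 0 < α) :
    (∀ Q : Kernel (Fin n → X) (Fin n → Z), IsMarkovKernel Q → IsSeqInteractive n α Q →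
      ENNReal.ofReal ((1 - η) / Real.sqrt (2 * n * (Real.exp α - 1) ^ 2))
          ≤ gDist dTV (privProd n fun x => Q x) P η ∧
        leftLimE (omegaTV P θ)
            (ENNReal.ofReal ((1 - η) / Real.sqrt (2 * n * (Real.exp α - 1) ^ 2)))
          ≤ DeltaA (privProd n fun x => Q x) P θ η) ∧
      (∀ η0 ε0 : ℝ, 0 < η0 → η0 < 1 → 0 < ε0 →
        ∃ c : ℝ, 0 < c ∧
          ∀ η' : ℝ, 0 < η' → η' < η0 → ∀ n' : ℕ, |Real.log η'| / ε0 < n' →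
            (∀ R : Kernel (Fin n' → X) (Fin n' → Z), IsMarkovKernel R →
              ENNReal.ofReal (c * Real.sqrt (|Real.log η'| / n'))
                ≤ gDist dH (privProd n' fun x => R x) P η') ∧
            (∀ Q : Kernel (Fin n' → X) (Fin n' → Z), IsMarkovKernel Q →
              IsSeqInteractive n' α Q →
                max
                    (leftLimE (omegaTV P θ) (ENNReal.ofReal
                      ((1 - η') / Real.sqrt (2 * n' * (Real.exp α - 1) ^ 2))))
                    (leftLimE (omegaH P θ) (ENNReal.ofReal
                      (c * Real.sqrt (|Real.log η'| / n'))))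
                  ≤ DeltaA (privProd n' fun x => Q x) P θ η')) := by
  have hprob {k : ℕ} (Q : Kernel (Fin k → X) (Fin k → Z)) [IsMarkovKernel Q] :
      ∀ μ ∈ P, IsProbabilityMeasure (privProd k (fun x => Q x) μ) := fun μ hμ => by
    have := hP μ hμ
    exact isProbabilityMeasure_privProd Q μ
  refine ⟨fun Q _ hQ => ?_, fun η₀ ε₀ _ hη₀ hε₀ =>
    ⟨hellingerConst η₀ ε₀, hellingerConst_pos hη₀ hε₀, fun η' h0 h1 k hk =>
      ⟨fun R _ => ofReal_le_gDist_dH R hP h0 h1 hη₀ hε₀ hk, fun Q _ hQ => max_le ?_ ?_⟩⟩⟩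
  · have hTV := hQ.ofReal_le_gDist_dTV (η := η) hP
    exact ⟨hTV, leftLimE_modulus_le_DeltaA (hprob Q) hTV⟩
  · exact leftLimE_modulus_le_DeltaA (hprob Q) (hQ.ofReal_le_gDist_dTV hP)
  · exact leftLimE_modulus_le_DeltaA (hprob Q) (ofReal_le_gDist_dH Q hP h0 h1 hη₀ hε₀ hk)

end PrivacyPaper
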